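/- Assume (μ,σ,f) satisfies (k-MLLC) for some k ∈ ℕ₀. Then for every i ∈ {0,…,k} the function φ⁽ⁱ⁾ is well-defined on Θ_i (all partial derivatives occurring in the recursive definition exist classically) and is k−i times classically differentiable with respect to (x, y⁽⁰⁾, z⁽⁰⁾, …, y⁽ⁱ⁾, z⁽ⁱ⁾). Moreover, for i ≥ 1, the function φ⁽ⁱ⁾ and all of these derivatives up to order k−i are bounded on every set of the form [0,T]×ℝⁿ×ℝᵐ×A×∏_{l=1}^{i}(B_l×C_l), where A ⊆ ℝ^{m×d}, B_l ⊆ ℝ^{m×_l n} and C_l ⊆ ℝ^{(m×d)×_l n} are compact sets such that B₁ is contained in the open ball of radius L_{σ,z}^{-1} in ℝ^{m×n} with respect to the operator norm. -/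

import Mathlib

namespace DecouplingFBSDE

/-! ### Generalized matrices

`Tens n m k` is the space `ℝ^{m×_k n}` of real valued maps on `[m]×[n]^k`;
`TensZ n m d k` is the space `ℝ^{(m×d)×_k n}` of real valued maps on `[m]×[d]×[n]^k`. -/

/-- `ℝ^{m×_k n}`. -/
abbrev Tens (n m k : ℕ) : Type := Fin m → (Fin k → Fin n) → ℝ

/-- `ℝ^{(m×d)×_k n}`. -/
abbrev TensZ (n m d k : ℕ) : Type := Fin m → Fin d → (Fin k → Fin n) → ℝ

/-- `ℝ^{n×d}`, the space of values of `σ`. -/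
abbrev Sig (n d : ℕ) : Type := Fin n → Fin d → ℝ

/-- The space of the variables `(x, y⁽⁰⁾, z⁽⁰⁾)` (identifying `ℝᵐ` with `Tens n m 0`
and `ℝ^{m×d}` with `TensZ n m d 0`). -/
abbrev Arg (n m d : ℕ) : Type := (Fin n → ℝ) × Tens n m 0 × TensZ n m d 0

variable {n m d : ℕ}

/-- Frobenius norm on `Tens n m k`. -/
noncomputable def frobT {k : ℕ} (y : Tens n m k) : ℝ :=
  Real.sqrt (∑ a, ∑ c, (y a c) ^ 2)

/-- Frobenius norm on `TensZ n m d k`. -/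
noncomputable def frobTZ {k : ℕ} (z : TensZ n m d k) : ℝ :=
  Real.sqrt (∑ a, ∑ b, ∑ c, (z a b c) ^ 2)

/-- Frobenius norm on `ℝ^{n×d}`. -/
noncomputable def frobS (s : Sig n d) : ℝ :=
  Real.sqrt (∑ i, ∑ j, (s i j) ^ 2)

/-- `y⁽¹⁾ ∈ ℝ^{m×_1 n}` as an ordinary `m×n` matrix. -/
def mat1 (v : Tens n m 1) : Matrix (Fin m) (Fin n) ℝ :=
  Matrix.of fun a i => v a (fun _ => i)

/-- Operator norm of `y⁽¹⁾ ∈ ℝ^{m×n}` with respect to the Euclidean norms. -/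
noncomputable def opN (v : Tens n m 1) : ℝ :=
  ‖LinearMap.toContinuousLinearMap (Matrix.toEuclideanLin (mat1 v))‖

/-- Standard basis vector of `ℝⁿ`. -/
def eX (c : Fin n) : Fin n → ℝ := Pi.single c 1

/-- Standard basis vector of `ℝᵐ ≅ Tens n m 0`. -/
def eY (a : Fin m) : Tens n m 0 := fun a' _ => if a' = a then 1 else 0

/-- Standard basis element of `ℝ^{m×d} ≅ TensZ n m d 0`. -/
def eZ (a : Fin m) (b : Fin d) : TensZ n m d 0 :=
  fun a' b' _ => if a' = a ∧ b' = b then 1 else 0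

/-- `σ_x(θ)` applied to a direction `v ∈ ℝⁿ`. -/
noncomputable def sx (σ : ℝ → Arg n m d → Sig n d) (t : ℝ) (p : Arg n m d)
    (v : Fin n → ℝ) : Sig n d := fderiv ℝ (σ t) p (v, 0, 0)

/-- `σ_y(θ)` applied to a direction `w ∈ ℝᵐ`. -/
noncomputable def sy (σ : ℝ → Arg n m d → Sig n d) (t : ℝ) (p : Arg n m d)
    (w : Tens n m 0) : Sig n d := fderiv ℝ (σ t) p (0, w, 0)

/-- `σ_z(θ)` applied to a direction `ζ ∈ ℝ^{m×d}`. -/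
noncomputable def sz (σ : ℝ → Arg n m d → Sig n d) (t : ℝ) (p : Arg n m d)
    (ζ : TensZ n m d 0) : Sig n d := fderiv ℝ (σ t) p (0, 0, ζ)

/-- `μ_x(θ)` applied to a direction `v ∈ ℝⁿ`. -/
noncomputable def mx (μ : ℝ → Arg n m d → (Fin n → ℝ)) (t : ℝ) (p : Arg n m d)
    (v : Fin n → ℝ) : Fin n → ℝ := fderiv ℝ (μ t) p (v, 0, 0)

/-- `μ_y(θ)` applied to a direction `w ∈ ℝᵐ`. -/
noncomputable def my (μ : ℝ → Arg n m d → (Fin n → ℝ)) (t : ℝ) (p : Arg n m d)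
    (w : Tens n m 0) : Fin n → ℝ := fderiv ℝ (μ t) p (0, w, 0)

/-- `μ_z(θ)` applied to a direction `ζ ∈ ℝ^{m×d}`. -/
noncomputable def mz (μ : ℝ → Arg n m d → (Fin n → ℝ)) (t : ℝ) (p : Arg n m d)
    (ζ : TensZ n m d 0) : Fin n → ℝ := fderiv ℝ (μ t) p (0, 0, ζ)

/-- The generalized matrix `Id_{m×d} − y⁽¹⁾σ_z(θ) ∈ ℝ^{(m×d)×(m×d)}`, viewed as an
`(m·d)×(m·d)` matrix. -/
noncomputable def Gmat (σ : ℝ → Arg n m d → Sig n d) (t : ℝ) (p : Arg n m d)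
    (y1 : Tens n m 1) : Matrix (Fin m × Fin d) (Fin m × Fin d) ℝ :=
  1 - Matrix.of fun ab pq => ∑ i, mat1 y1 ab.1 i * sz σ t p (eZ pq.1 pq.2) i ab.2

/-- `y⁽¹⁾σ_x(θ) + y⁽¹⁾σ_y(θ)y⁽¹⁾ + z⁽¹⁾ ∈ ℝ^{(m×d)×n}`. -/
noncomputable def Rh (σ : ℝ → Arg n m d → Sig n d) (t : ℝ) (p : Arg n m d)
    (y1 : Tens n m 1) (z1 : TensZ n m d 1) : TensZ n m d 1 :=
  fun a b c =>
    (∑ i, mat1 y1 a i * sx σ t p (eX (c 0)) i b)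
    + (∑ j, (∑ i, mat1 y1 a i * sy σ t p (eY j) i b) * mat1 y1 j (c 0))
    + z1 a b c

/-- `h⁽¹⁾(θ₁) := (Id_{m×d} − y⁽¹⁾σ_z(θ))⁻¹ (y⁽¹⁾σ_x(θ) + y⁽¹⁾σ_y(θ)y⁽¹⁾ + z⁽¹⁾)`. -/
noncomputable def h1 (σ : ℝ → Arg n m d → Sig n d) (t : ℝ) (p : Arg n m d)
    (y1 : Tens n m 1) (z1 : TensZ n m d 1) : TensZ n m d 1 :=
  fun a b c =>
    ∑ pq : Fin m × Fin d, (Gmat σ t p y1)⁻¹ (a, b) pq * Rh σ t p y1 z1 pq.1 pq.2 c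

/-- The `n×n` matrix `σ⁽ᵇ⁾_x(θ) + σ⁽ᵇ⁾_y(θ)y⁽¹⁾ + σ⁽ᵇ⁾_z(θ)h⁽¹⁾(θ₁)` for the `b`-th
column of `σ`. -/
noncomputable def Bmat (σ : ℝ → Arg n m d → Sig n d) (t : ℝ) (p : Arg n m d)
    (y1 : Tens n m 1) (z1 : TensZ n m d 1) (b : Fin d) : Fin n → Fin n → ℝ :=
  fun i c =>
    sx σ t p (eX c) i b
    + (∑ a, sy σ t p (eY a) i b * mat1 y1 a c)
    + ∑ pq : Fin m × Fin d,
        sz σ t p (eZ pq.1 pq.2) i b * h1 σ t p y1 z1 pq.1 pq.2 (fun _ => c)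

/-- The `n×n` matrix `μ_x(θ) + μ_y(θ)y⁽¹⁾ + μ_z(θ)h⁽¹⁾(θ₁)`. -/
noncomputable def Amat (μ : ℝ → Arg n m d → (Fin n → ℝ)) (σ : ℝ → Arg n m d → Sig n d)
    (t : ℝ) (p : Arg n m d) (y1 : Tens n m 1) (z1 : TensZ n m d 1) :
    Fin n → Fin n → ℝ :=
  fun i c =>
    mx μ t p (eX c) i
    + (∑ a, my μ t p (eY a) i * mat1 y1 a c)
    + ∑ pq : Fin m × Fin d,
        mz μ t p (eZ pq.1 pq.2) i * h1 σ t p y1 z1 pq.1 pq.2 (fun _ => c)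

/-- Product of a generalized matrix `y ∈ ℝ^{m×_{k+1} n}` with an `n×n` matrix `A`,
contracting the trailing index of `y` with the first index of `A`. -/
def mulRight {k : ℕ} (y : Tens n m (k + 1)) (A : Fin n → Fin n → ℝ) :
    Tens n m (k + 1) :=
  fun a c => ∑ j, y a (Fin.snoc (Fin.init c) j) * A j (c (Fin.last k))

/-- `h⁽ᵏ⁾(θ_k)` for `k ≥ 2`:
`h⁽ᵏ'ʲ⁾(θ_k) = z⁽ᵏ'ʲ⁾ + y⁽ᵏ⁾(σ⁽ʲ⁾_x(θ) + σ⁽ʲ⁾_y(θ)y⁽¹⁾ + σ⁽ʲ⁾_z(θ)h⁽¹⁾(θ₁))`. -/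
noncomputable def hK (σ : ℝ → Arg n m d → Sig n d) (t : ℝ) (p : Arg n m d)
    (y1 : Tens n m 1) (z1 : TensZ n m d 1) {k : ℕ}
    (yk : Tens n m (k + 1)) (zk : TensZ n m d (k + 1)) : TensZ n m d (k + 1) :=
  fun a b c => zk a b c + mulRight yk (Bmat σ t p y1 z1 b) a c

/-- `h⁽ᵏ⁾` for every `k ≥ 1`: `h⁽¹⁾` for `k = 1` and the affine formula for `k ≥ 2`. -/
noncomputable def hGen (σ : ℝ → Arg n m d → Sig n d) (t : ℝ) (p : Arg n m d)
    (y1 : Tens n m 1) (z1 : TensZ n m d 1) :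
    {k : ℕ} → Tens n m (k + 1) → TensZ n m d (k + 1) → TensZ n m d (k + 1)
  | 0, yk, zk => h1 σ t p yk zk
  | _ + 1, yk, zk => hK σ t p y1 z1 yk zk

/-- The state space `(x, y⁽⁰⁾, z⁽⁰⁾, …, y⁽ⁱ⁾, z⁽ⁱ⁾)` of the spatial variables
of `Θ_i`. -/
abbrev EE (n m d i : ℕ) : Type :=
  (Fin n → ℝ) × ((j : Fin (i + 1)) → Tens n m j) × ((j : Fin (i + 1)) → TensZ n m d j)

/-- `φ_x(θ) ∈ ℝ^{m×_i n×n}`, reassembled as an element of `ℝ^{m×_{i+1} n}` (the trailing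
index runs through the `x`-directions). -/
def appX {i : ℕ} (L : (Fin n → ℝ) → Tens n m i) : Tens n m (i + 1) :=
  fun a c => L (eX (c (Fin.last i))) a (Fin.init c)

/-- Product `φ_{y⁽ʲ⁾}(θ)·y`, applying the linear map `L` slice-wise in the trailing
index of `y ∈ ℝ^{m×_{j+1} n}`. -/
def appY {j i : ℕ} (L : Tens n m j → Tens n m i) (y : Tens n m (j + 1)) :
    Tens n m (i + 1) :=
  fun a c => L (fun a' c' => y a' (Fin.snoc c' (c (Fin.last i)))) a (Fin.init c)

/-- Product `φ_{z⁽ʲ⁾}(θ)·z`, applying the linear map `L` slice-wise in the trailing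
index of `z ∈ ℝ^{(m×d)×_{j+1} n}`. -/
def appZ {j i : ℕ} (L : TensZ n m d j → Tens n m i) (z : TensZ n m d (j + 1)) :
    Tens n m (i + 1) :=
  fun a c => L (fun a' b' c' => z a' b' (Fin.snoc c' (c (Fin.last i)))) a (Fin.init c)

/-- Partial derivative in the direction of `x`, extracted from a total derivative. -/
noncomputable def Dx {i : ℕ} (D : EE n m d i →L[ℝ] Tens n m i) :
    (Fin n → ℝ) → Tens n m i :=
  fun v => D (v, 0, 0)

/-- Partial derivative in the direction of `y⁽ʲ⁾`, extracted from a total derivative. -/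
noncomputable def Dyp {i : ℕ} (D : EE n m d i →L[ℝ] Tens n m i) (j : Fin (i + 1)) :
    Tens n m j → Tens n m i :=
  fun w => D (0, Pi.single j w, 0)

/-- Partial derivative in the direction of `z⁽ʲ⁾`, extracted from a total derivative. -/
noncomputable def Dzp {i : ℕ} (D : EE n m d i →L[ℝ] Tens n m i) (j : Fin (i + 1)) :
    TensZ n m d j → Tens n m i :=
  fun w => D (0, 0, Pi.single j w)

/-- The type of the function `φ⁽ⁱ⁾`. -/
abbrev PhiFun (n m d i : ℕ) : Type := ℝ → EE n m d i → Tens n m i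

/-- The right hand side of the recursion defining `φ⁽ⁱ⁺¹⁾` from the derivative `D`
of `φ⁽ⁱ⁾`:
`φ⁽ⁱ⁺¹⁾ = φ⁽ⁱ⁾_x + Σ_j (φ⁽ⁱ⁾_{y⁽ʲ⁾}y⁽ʲ⁺¹⁾ + φ⁽ⁱ⁾_{z⁽ʲ⁾}h⁽ʲ⁺¹⁾)
         − y⁽ⁱ⁺¹⁾(μ_x + μ_y y⁽¹⁾ + μ_z h⁽¹⁾) − Σ_b z⁽ⁱ⁺¹'ᵇ⁾(σ⁽ᵇ⁾_x + σ⁽ᵇ⁾_y y⁽¹⁾ + σ⁽ᵇ⁾_z h⁽¹⁾)`. -/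
noncomputable def phiStep {i : ℕ} (μ : ℝ → Arg n m d → (Fin n → ℝ))
    (σ : ℝ → Arg n m d → Sig n d) (t : ℝ) (D : EE n m d i →L[ℝ] Tens n m i)
    (x : Fin n → ℝ) (Y : (j : Fin (i + 2)) → Tens n m j)
    (Z : (j : Fin (i + 2)) → TensZ n m d j) : Tens n m (i + 1) :=
  (appX (Dx D)
      + ∑ j : Fin (i + 1),
          (appY (Dyp D j) (Y j.succ)
            + appZ (Dzp D j)
                (hGen σ t (x, Y ⟨0, by omega⟩, Z ⟨0, by omega⟩)
                  (Y ⟨1, by omega⟩) (Z ⟨1, by omega⟩) (Y j.succ) (Z j.succ))))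
    - mulRight (Y (Fin.last (i + 1)))
        (Amat μ σ t (x, Y ⟨0, by omega⟩, Z ⟨0, by omega⟩)
          (Y ⟨1, by omega⟩) (Z ⟨1, by omega⟩))
    - ∑ b : Fin d,
        mulRight (fun a c => Z (Fin.last (i + 1)) a b c)
          (Bmat σ t (x, Y ⟨0, by omega⟩, Z ⟨0, by omega⟩)
            (Y ⟨1, by omega⟩) (Z ⟨1, by omega⟩) b)

/-- The family `(φ⁽⁰⁾, …, φ⁽ᵏ⁾)` satisfies the defining recursion of the generators
of the backward equations for the spatial derivatives of the decoupling field: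
`φ⁽⁰⁾ = f` and, at every point of `Θ_{i+1}`, `φ⁽ⁱ⁾` is (classically) differentiable
in `(x, y⁽⁰⁾, z⁽⁰⁾, …, y⁽ⁱ⁾, z⁽ⁱ⁾)` and `φ⁽ⁱ⁺¹⁾` is given by the recursion formula. -/
structure IsPhiChain (n m d k : ℕ) (T Lz : ℝ)
    (μ : ℝ → Arg n m d → (Fin n → ℝ)) (σ : ℝ → Arg n m d → Sig n d)
    (f : ℝ → Arg n m d → Tens n m 0)
    (φ : (i : ℕ) → PhiFun n m d i) : Prop where
  base : ∀ t ∈ Set.Icc (0:ℝ) T, ∀ p : EE n m d 0,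
    φ 0 t p = f t (p.1, p.2.1 ⟨0, by omega⟩, p.2.2 ⟨0, by omega⟩)
  step : ∀ i : ℕ, i + 1 ≤ k → ∀ t ∈ Set.Icc (0:ℝ) T,
    ∀ (x : Fin n → ℝ) (Y : (j : Fin (i + 2)) → Tens n m j)
      (Z : (j : Fin (i + 2)) → TensZ n m d j),
      Lz * opN (Y ⟨1, by omega⟩) < 1 →
      ∃ D : EE n m d i →L[ℝ] Tens n m i,
        HasFDerivAt (φ i t) D (x, fun j => Y j.castSucc, fun j => Z j.castSucc) ∧
        φ (i + 1) t (x, Y, Z) = phiStep μ σ t D x Y Z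

/-- The modified local Lipschitz conditions `(k-MLLC)` for `(μ,σ,f)`:
`μ, σ, f` are deterministic, `k` times classically differentiable in `(x,y,z)`,
they and their derivatives up to order `k` are Lipschitz continuous in `(x,y,z)`
on sets with bounded `z`-component (uniformly in `t ∈ [0,T]`),
`‖μ(·,0,0,0)‖_∞, ‖f(·,0,0,0)‖_∞, ‖σ(·,·,·,0)‖_∞ < ∞`, and `σ` is Lipschitz
continuous in `z` with constant `Lz` with respect to Frobenius norms. -/
structure MLLC (n m d k : ℕ) (T : ℝ)
    (μ : ℝ → Arg n m d → (Fin n → ℝ)) (σ : ℝ → Arg n m d → Sig n d)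
    (f : ℝ → Arg n m d → Tens n m 0) (Lz : ℝ) : Prop where
  smooth_mu : ∀ t ∈ Set.Icc (0:ℝ) T, ContDiff ℝ (k : ℕ∞) (μ t)
  smooth_sigma : ∀ t ∈ Set.Icc (0:ℝ) T, ContDiff ℝ (k : ℕ∞) (σ t)
  smooth_f : ∀ t ∈ Set.Icc (0:ℝ) T, ContDiff ℝ (k : ℕ∞) (f t)
  lipschitz_on_bounded : ∀ R : ℝ, ∃ L : NNReal, ∀ t ∈ Set.Icc (0:ℝ) T, ∀ j : ℕ, j ≤ k →
    LipschitzOnWith L (iteratedFDeriv ℝ j (μ t)) {p : Arg n m d | frobTZ p.2.2 ≤ R} ∧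
    LipschitzOnWith L (iteratedFDeriv ℝ j (σ t)) {p : Arg n m d | frobTZ p.2.2 ≤ R} ∧
    LipschitzOnWith L (iteratedFDeriv ℝ j (f t)) {p : Arg n m d | frobTZ p.2.2 ≤ R}
  bounded_at_zero : ∃ C : ℝ, ∀ t ∈ Set.Icc (0:ℝ) T,
    ‖μ t 0‖ ≤ C ∧ ‖f t 0‖ ≤ C ∧ ∀ (x : Fin n → ℝ) (y : Tens n m 0), ‖σ t (x, y, 0)‖ ≤ C
  lz_nonneg : 0 ≤ Lz
  lz_lipschitz : ∀ t ∈ Set.Icc (0:ℝ) T, ∀ (x : Fin n → ℝ) (y : Tens n m 0)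
    (z z' : TensZ n m d 0),
    frobS (σ t (x, y, z) - σ t (x, y, z')) ≤ Lz * frobTZ (z - z')

/-! Functions whose derivatives up to order `r` are bounded on a set `S`, uniformly in a parameter,
are closed under sums, bilinear operations, differentiation (with loss of one order) and
composition with linear maps, and every term of the recursion for `φ⁽ⁱ⁺¹⁾` except the inverse of
`Id − y⁽¹⁾σ_z` is built from `∂φ⁽ⁱ⁾`, `∂μ`, `∂σ` and the coordinates by such operations. For the
inverse, the Lipschitz constant `L_{σ,z}` bounds the Frobenius norm of `σ_z ζ` by that of `ζ`, so
`‖y⁽¹⁾σ_z‖ ≤ L_{σ,z} ‖y⁽¹⁾‖_op ≤ c < 1` in operator norm on the sets considered, which makes the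
inverse bounded; its higher derivatives are bounded by induction on the order, because
`∂(F⁻¹) = -F⁻¹ (∂F) F⁻¹`. An induction on `i` concludes: boundedness of `∂φ⁽ⁱ⁾` up to order
`k - i - 1` gives that of `φ⁽ⁱ⁺¹⁾` up to the same order. -/

open Set Filter Topology Matrix

section BoundedDerivatives

variable {𝕜 : Type*} [NontriviallyNormedField 𝕜] {E E' G H K : Type*}
  [NormedAddCommGroup E] [NormedSpace 𝕜 E] [NormedAddCommGroup E'] [NormedSpace 𝕜 E']
  [NormedAddCommGroup G] [NormedSpace 𝕜 G] [NormedAddCommGroup H] [NormedSpace 𝕜 H]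
  [NormedAddCommGroup K] [NormedSpace 𝕜 K] {ι : Type*} {r s : ℕ} {S : Set E}

variable (𝕜) in
/-- The family `F` consists of functions that are `r` times continuously differentiable at the
points of `S`, with derivatives of order at most `r` bounded on `S` uniformly in the family.
The points of `S` need not be interior: the derivatives are those of the ambient space. -/
structure BoundedDerivsOn (r : ℕ) (S : Set E) (F : ι → E → G) : Prop where
  contDiffAt : ∀ t, ∀ p ∈ S, ContDiffAt 𝕜 r (F t) p
  bounded : ∃ M : ℝ, ∀ t, ∀ p ∈ S, ∀ j ≤ r, ‖iteratedFDeriv 𝕜 j (F t) p‖ ≤ M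

theorem exists_isOpen_contDiffOn {f : E → G} {p : E} (hf : ContDiffAt 𝕜 r f p) :
    ∃ U, IsOpen U ∧ p ∈ U ∧ ContDiffOn 𝕜 r f U := by
  obtain ⟨U, hU, hfU⟩ := hf.contDiffOn le_rfl (by simp)
  exact ⟨interior U, isOpen_interior, mem_interior_iff_mem_nhds.2 hU, hfU.mono interior_subset⟩

theorem fderiv_ringInverse_comp {R : Type*} [NormedRing R] [NormedAlgebra 𝕜 R]
    [HasSummableGeomSeries R] {f : E → R} {p : E} (hf : DifferentiableAt 𝕜 f p)
    (hu : IsUnit (f p)) :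
    fderiv 𝕜 (fun p => Ring.inverse (f p)) p =
      ContinuousLinearMap.compL 𝕜 E R R (-ContinuousLinearMap.mulLeftRight 𝕜 R
        (Ring.inverse (f p)) (Ring.inverse (f p))) (fderiv 𝕜 f p) := by
  obtain ⟨u, hu⟩ := hu
  have hinv : HasFDerivAt Ring.inverse
      (-ContinuousLinearMap.mulLeftRight 𝕜 R ↑u⁻¹ ↑u⁻¹) (f p) := hu ▸ hasFDerivAt_ringInverse u
  rw [← hu, Ring.inverse_unit]
  exact (hinv.comp p hf.hasFDerivAt).fderiv

namespace BoundedDerivsOn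

theorem mono {F : ι → E → G} (hF : BoundedDerivsOn 𝕜 r S F) (hsr : s ≤ r) :
    BoundedDerivsOn 𝕜 s S F :=
  ⟨fun t p hp => (hF.contDiffAt t p hp).of_le (by exact_mod_cast hsr),
    hF.bounded.imp fun _ hM t p hp j hj => hM t p hp j (hj.trans hsr)⟩

theorem congr {F F' : ι → E → G} (hF : BoundedDerivsOn 𝕜 r S F)
    (h : ∀ t, ∀ p ∈ S, F' t =ᶠ[𝓝 p] F t) : BoundedDerivsOn 𝕜 r S F' :=
  ⟨fun t p hp => (hF.contDiffAt t p hp).congr_of_eventuallyEq (h t p hp),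
    hF.bounded.imp fun _ hM t p hp j hj => by
      rw [((h t p hp).iteratedFDeriv 𝕜 j).eq_of_nhds]
      exact hM t p hp j hj⟩

theorem fderiv {F : ι → E → G} (hF : BoundedDerivsOn 𝕜 (r + 1) S F) :
    BoundedDerivsOn 𝕜 r S fun t => fderiv 𝕜 (F t) :=
  ⟨fun t p hp => (hF.contDiffAt t p hp).fderiv_right (by norm_cast),
    hF.bounded.imp fun _ hM t p hp j hj =>
      norm_iteratedFDeriv_fderiv.trans_le (hM t p hp (j + 1) (by lia))⟩

theorem of_fderiv {F : ι → E → G} (hF : ∀ t, ∀ p ∈ S, ContDiffAt 𝕜 (r + 1 : ℕ) (F t) p)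
    (hbdd : ∃ M : ℝ, ∀ t, ∀ p ∈ S, ‖F t p‖ ≤ M)
    (hF' : BoundedDerivsOn 𝕜 r S fun t => _root_.fderiv 𝕜 (F t)) :
    BoundedDerivsOn 𝕜 (r + 1) S F := by
  obtain ⟨M, hM⟩ := hbdd
  obtain ⟨M', hM'⟩ := hF'.bounded
  refine ⟨hF, max M M', fun t p hp j hj => ?_⟩
  cases j with
  | zero => exact norm_iteratedFDeriv_zero.trans_le ((hM t p hp).trans (le_max_left M M'))
  | succ j =>
    exact norm_iteratedFDeriv_fderiv.symm.trans_le
      ((hM' t p hp j (by lia)).trans (le_max_right M M'))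

theorem const (c : G) : BoundedDerivsOn 𝕜 r S fun (_ : ι) _ => c := by
  refine ⟨fun _ _ _ => contDiffAt_const, ‖c‖, fun _ _ _ j _ => ?_⟩
  cases j with
  | zero => exact norm_iteratedFDeriv_zero.le
  | succ j => simp [iteratedFDeriv_const_of_ne]

theorem of_clm (L : E →L[𝕜] G) (hL : ∃ M : ℝ, ∀ p ∈ S, ‖L p‖ ≤ M) :
    BoundedDerivsOn 𝕜 r S fun (_ : ι) p => L p := by
  refine mono (of_fderiv (fun _ _ _ => L.contDiff.contDiffAt)
    (hL.imp fun _ hM _ => hM) ?_) (Nat.le_succ r)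
  exact (const L).congr fun _ _ _ => .of_forall fun _ => L.fderiv

theorem comp_clm {S' : Set E'} {F : ι → E' → G} (hF : BoundedDerivsOn 𝕜 r S' F) (L : E →L[𝕜] E')
    (hL : MapsTo L S S') : BoundedDerivsOn 𝕜 r S fun t p => F t (L p) := by
  obtain ⟨M, hM⟩ := hF.bounded
  refine ⟨fun t p hp => (hF.contDiffAt t _ (hL hp)).comp p L.contDiff.contDiffAt,
    M * (max 1 ‖L‖) ^ r, fun t p hp j hj => ?_⟩
  obtain ⟨U, hU, hpU, hFU⟩ := exists_isOpen_contDiffOn (hF.contDiffAt t _ (hL hp))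
  have hU' : IsOpen (L ⁻¹' U) := hU.preimage L.continuous
  calc ‖iteratedFDeriv 𝕜 j (F t ∘ L) p‖
      = ‖(iteratedFDeriv 𝕜 j (F t) (L p)).compContinuousLinearMap fun _ => L‖ := by
        rw [← iteratedFDerivWithin_of_isOpen j hU' hpU, L.iteratedFDerivWithin_comp_right hFU
          hU.uniqueDiffOn hU'.uniqueDiffOn hpU (by exact_mod_cast hj),
          iteratedFDerivWithin_of_isOpen j hU hpU]
    _ ≤ ‖iteratedFDeriv 𝕜 j (F t) (L p)‖ * ‖L‖ ^ j := by
        simpa only [Finset.prod_const, Finset.card_univ, Fintype.card_fin] using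
          ContinuousMultilinearMap.norm_compContinuousLinearMap_le
            (iteratedFDeriv 𝕜 j (F t) (L p)) fun _ => L
    _ ≤ M * max 1 ‖L‖ ^ r := by
        have hpow : ‖L‖ ^ j ≤ max 1 ‖L‖ ^ r :=
          (pow_le_pow_left₀ (norm_nonneg L) (le_max_right 1 ‖L‖) j).trans
            (pow_le_pow_right₀ (le_max_left 1 ‖L‖) hj)
        gcongr
        · exact (norm_nonneg _).trans (hM t _ (hL hp) j hj)
        · exact hM t _ (hL hp) j hj

theorem clm_comp {F : ι → E → G} (L : G →L[𝕜] H) (hF : BoundedDerivsOn 𝕜 r S F) :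
    BoundedDerivsOn 𝕜 r S fun t p => L (F t p) := by
  obtain ⟨M, hM⟩ := hF.bounded
  refine ⟨fun t p hp => L.contDiff.contDiffAt.comp p (hF.contDiffAt t p hp),
    ‖L‖ * M, fun t p hp j hj => ?_⟩
  exact (L.norm_iteratedFDeriv_comp_left (hF.contDiffAt t p hp) (by exact_mod_cast hj)).trans
    (mul_le_mul_of_nonneg_left (hM t p hp j hj) (norm_nonneg L))

theorem add {F F' : ι → E → G} (hF : BoundedDerivsOn 𝕜 r S F) (hF' : BoundedDerivsOn 𝕜 r S F') :
    BoundedDerivsOn 𝕜 r S fun t p => F t p + F' t p := by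
  obtain ⟨M, hM⟩ := hF.bounded
  obtain ⟨M', hM'⟩ := hF'.bounded
  refine ⟨fun t p hp => (hF.contDiffAt t p hp).add (hF'.contDiffAt t p hp), M + M',
    fun t p hp j hj => ?_⟩
  have hjr : (j : WithTop ℕ∞) ≤ r := by exact_mod_cast hj
  calc ‖iteratedFDeriv 𝕜 j (F t + F' t) p‖
      = ‖iteratedFDeriv 𝕜 j (F t) p + iteratedFDeriv 𝕜 j (F' t) p‖ := by
        rw [iteratedFDeriv_add_apply ((hF.contDiffAt t p hp).of_le hjr)
          ((hF'.contDiffAt t p hp).of_le hjr)]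
    _ ≤ M + M' := norm_add_le_of_le (hM t p hp j hj) (hM' t p hp j hj)

theorem neg {F : ι → E → G} (hF : BoundedDerivsOn 𝕜 r S F) :
    BoundedDerivsOn 𝕜 r S fun t p => -F t p :=
  hF.clm_comp (-ContinuousLinearMap.id 𝕜 G)

theorem sub {F F' : ι → E → G} (hF : BoundedDerivsOn 𝕜 r S F) (hF' : BoundedDerivsOn 𝕜 r S F') :
    BoundedDerivsOn 𝕜 r S fun t p => F t p - F' t p := by
  simpa only [sub_eq_add_neg] using hF.add hF'.neg

theorem sum {β : Type*} {u : Finset β} {F : β → ι → E → G}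
    (hF : ∀ b ∈ u, BoundedDerivsOn 𝕜 r S (F b)) :
    BoundedDerivsOn 𝕜 r S fun t p => ∑ b ∈ u, F b t p := by
  classical
  induction u using Finset.induction_on with
  | empty => simpa only [Finset.sum_empty] using const 0
  | insert b u hb ih =>
    simpa only [Finset.sum_insert hb] using (hF b (Finset.mem_insert_self b u)).add
      (ih fun b' hb' => hF b' (Finset.mem_insert_of_mem hb'))

section Pi

variable {β : Type*} [Fintype β] {V : β → Type*} [∀ b, NormedAddCommGroup (V b)]
  [∀ b, NormedSpace 𝕜 (V b)] {F : ι → E → ∀ b, V b}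

theorem pi_apply (hF : BoundedDerivsOn 𝕜 r S F) (b : β) :
    BoundedDerivsOn 𝕜 r S fun t p => F t p b :=
  hF.clm_comp (ContinuousLinearMap.proj b)

theorem pi (hF : ∀ b, BoundedDerivsOn 𝕜 r S fun t p => F t p b) : BoundedDerivsOn 𝕜 r S F := by
  classical
  have hsum : F = fun t p => ∑ b, ContinuousLinearMap.single 𝕜 V b (F t p b) := by
    ext t p b
    simp [Finset.sum_apply, Finset.sum_pi_single]
  rw [hsum]
  exact sum fun b _ => (hF b).clm_comp _

end Pi

theorem bilinear {F : ι → E → G} {F' : ι → E → H} (B : G →L[𝕜] H →L[𝕜] K)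
    (hF : BoundedDerivsOn 𝕜 r S F) (hF' : BoundedDerivsOn 𝕜 r S F') :
    BoundedDerivsOn 𝕜 r S fun t p => B (F t p) (F' t p) := by
  obtain ⟨M, hM⟩ := hF.bounded
  obtain ⟨M', hM'⟩ := hF'.bounded
  refine ⟨fun t p hp => B.isBoundedBilinearMap.contDiff.contDiffAt.comp p
    ((hF.contDiffAt t p hp).prodMk (hF'.contDiffAt t p hp)),
    ‖B‖ * ∑ j ∈ Finset.range (r + 1), ∑ i ∈ Finset.range (j + 1), j.choose i * M * M',
    fun t p hp j hj => ?_⟩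
  obtain ⟨U, hU, hpU, hFU⟩ := exists_isOpen_contDiffOn (hF.contDiffAt t p hp)
  obtain ⟨U', hU', hpU', hFU'⟩ := exists_isOpen_contDiffOn (hF'.contDiffAt t p hp)
  have hM0 : 0 ≤ M := (norm_nonneg _).trans (hM t p hp j hj)
  have hM'0 : 0 ≤ M' := (norm_nonneg _).trans (hM' t p hp j hj)
  have hV : IsOpen (U ∩ U') := hU.inter hU'
  have hpV : p ∈ U ∩ U' := ⟨hpU, hpU'⟩
  have hbound := B.norm_iteratedFDerivWithin_le_of_bilinear (hFU.mono inter_subset_left)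
    (hFU'.mono inter_subset_right) hV.uniqueDiffOn hpV (n := j) (by exact_mod_cast hj)
  simp only [iteratedFDerivWithin_of_isOpen _ hV hpV] at hbound
  refine hbound.trans ?_
  gcongr
  calc ∑ i ∈ Finset.range (j + 1), (j.choose i : ℝ) * ‖iteratedFDeriv 𝕜 i (F t) p‖ *
        ‖iteratedFDeriv 𝕜 (j - i) (F' t) p‖
      ≤ ∑ i ∈ Finset.range (j + 1), j.choose i * M * M' := by
        gcongr with i hi
        · exact hM t p hp i (by grind)
        · exact hM' t p hp (j - i) (by lia)
    _ ≤ ∑ j ∈ Finset.range (r + 1), ∑ i ∈ Finset.range (j + 1), j.choose i * M * M' :=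
        Finset.single_le_sum (f := fun j => ∑ i ∈ Finset.range (j + 1), j.choose i * M * M')
          (fun _ _ => by positivity) (by grind)

theorem clm_apply {D : ι → E → G →L[𝕜] H} {F : ι → E → G} (hD : BoundedDerivsOn 𝕜 r S D)
    (hF : BoundedDerivsOn 𝕜 r S F) : BoundedDerivsOn 𝕜 r S fun t p => D t p (F t p) :=
  bilinear (ContinuousLinearMap.id 𝕜 (G →L[𝕜] H)) hD hF

theorem clm_apply_const {D : ι → E → G →L[𝕜] H} (hD : BoundedDerivsOn 𝕜 r S D) (v : G) :
    BoundedDerivsOn 𝕜 r S fun t p => D t p v :=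
  hD.clm_apply (const v)

section Ring

variable {R : Type*} [NormedRing R] [NormedAlgebra 𝕜 R] {F F' : ι → E → R}

theorem mul (hF : BoundedDerivsOn 𝕜 r S F) (hF' : BoundedDerivsOn 𝕜 r S F') :
    BoundedDerivsOn 𝕜 r S fun t p => F t p * F' t p :=
  bilinear (ContinuousLinearMap.mul 𝕜 R) hF hF'

theorem ringInverse [HasSummableGeomSeries R] (hF : BoundedDerivsOn 𝕜 r S F)
    (hunit : ∀ t, ∀ p ∈ S, IsUnit (F t p))
    (hbdd : ∃ M : ℝ, ∀ t, ∀ p ∈ S, ‖Ring.inverse (F t p)‖ ≤ M) :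
    BoundedDerivsOn 𝕜 r S fun t p => Ring.inverse (F t p) := by
  have hsmooth : ∀ t, ∀ p ∈ S, ContDiffAt 𝕜 r (fun p => Ring.inverse (F t p)) p := by
    intro t p hp
    obtain ⟨u, hu⟩ := hunit t p hp
    have hinv : ContDiffAt 𝕜 r Ring.inverse (F t p) := hu ▸ contDiffAt_ringInverse 𝕜 u
    exact hinv.comp p (hF.contDiffAt t p hp)
  induction r with
  | zero =>
    obtain ⟨M, hM⟩ := hbdd
    refine ⟨hsmooth, M, fun t p hp j hj => ?_⟩
    rw [Nat.le_zero.1 hj, norm_iteratedFDeriv_zero]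
    exact hM t p hp
  | succ r ih =>
    have hinv := ih (hF.mono (Nat.le_succ r)) fun t p hp =>
      (hsmooth t p hp).of_le (by exact_mod_cast Nat.le_succ r)
    refine of_fderiv hsmooth hbdd ?_
    have hderiv := bilinear (ContinuousLinearMap.compL 𝕜 E R R)
      (bilinear (ContinuousLinearMap.mulLeftRight 𝕜 R) hinv hinv).neg hF.fderiv
    refine hderiv.congr fun t p hp => ?_
    have hsmooth_near : ∀ᶠ p' in 𝓝 p, ContDiffAt 𝕜 (r + 1 : ℕ) (F t) p' :=
      (hF.contDiffAt t p hp).eventually (by simp)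
    have hunit_near : ∀ᶠ p' in 𝓝 p, IsUnit (F t p') :=
      (hF.contDiffAt t p hp).continuousAt.eventually_mem (Units.isOpen.mem_nhds (hunit t p hp))
    filter_upwards [hsmooth_near, hunit_near] with p' hp' hu
    exact fderiv_ringInverse_comp (hp'.differentiableAt (by simp)) hu

end Ring

theorem ringInverse_of_norm_one_sub_le {R : Type*} [NormedRing R] [NormedAlgebra 𝕜 R]
    [HasSummableGeomSeries R] {F : ι → E → R} (hF : BoundedDerivsOn 𝕜 r S F) {c : ℝ} (hc : c < 1)
    (hFc : ∀ t, ∀ p ∈ S, ‖1 - F t p‖ ≤ c) :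
    BoundedDerivsOn 𝕜 r S fun t p => Ring.inverse (F t p) := by
  have hunit : ∀ t, ∀ p ∈ S, IsUnit (F t p) := fun t p hp => by
    simpa only [sub_sub_cancel] using isUnit_one_sub_of_norm_lt_one ((hFc t p hp).trans_lt hc)
  refine hF.ringInverse hunit ⟨‖(1 : R)‖ / (1 - c), fun t p hp => ?_⟩
  rw [le_div_iff₀ (sub_pos.2 hc)]
  set v := Ring.inverse (F t p)
  have hv : v = 1 + (1 - F t p) * v := by
    rw [sub_mul, one_mul, Ring.mul_inverse_cancel _ (hunit t p hp), add_sub_cancel]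
  have hnorm : ‖v‖ ≤ ‖(1 : R)‖ + c * ‖v‖ :=
    calc ‖v‖ = ‖1 + (1 - F t p) * v‖ := congrArg norm hv
      _ ≤ ‖(1 : R)‖ + c * ‖v‖ := norm_add_le_of_le le_rfl
        ((norm_mul_le _ _).trans (mul_le_mul_of_nonneg_right (hFc t p hp) (norm_nonneg v)))
  linarith

end BoundedDerivsOn

end BoundedDerivatives

section Norms

open scoped Matrix.Norms.L2Operator

theorem opN_eq_norm (y : Tens n m 1) : opN y = ‖mat1 y‖ := rfl

theorem continuous_opN : Continuous (opN : Tens n m 1 → ℝ) := by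
  have hmat : Continuous (mat1 : Tens n m 1 → Matrix (Fin m) (Fin n) ℝ) :=
    continuous_pi fun a => continuous_pi fun _ => continuous_apply_apply a _
  exact hmat.norm

theorem continuous_frobS : Continuous (frobS : Sig n d → ℝ) := by
  unfold frobS
  fun_prop

theorem continuous_frobTZ {k : ℕ} : Continuous (frobTZ : TensZ n m d k → ℝ) := by
  unfold frobTZ
  fun_prop

theorem frobS_smul (c : ℝ) (s : Sig n d) : frobS (c • s) = |c| * frobS s := by
  simp only [frobS, Pi.smul_apply, smul_eq_mul, mul_pow, ← Finset.mul_sum,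
    Real.sqrt_mul (sq_nonneg c), Real.sqrt_sq_eq_abs]

theorem frobTZ_smul {k : ℕ} (c : ℝ) (z : TensZ n m d k) : frobTZ (c • z) = |c| * frobTZ z := by
  simp only [frobTZ, Pi.smul_apply, smul_eq_mul, mul_pow, ← Finset.mul_sum,
    Real.sqrt_mul (sq_nonneg c), Real.sqrt_sq_eq_abs]

theorem frobS_sq (s : Sig n d) : frobS s ^ 2 = ∑ i, ∑ b, s i b ^ 2 :=
  Real.sq_sqrt (by positivity)

theorem frobTZ_sq {k : ℕ} (z : TensZ n m d k) : frobTZ z ^ 2 = ∑ a, ∑ b, ∑ c, z a b c ^ 2 :=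
  Real.sq_sqrt (by positivity)

theorem l2_opNorm_le_of_sum_sq_mulVec_le {I J : Type*} [Fintype I] [Fintype J] [DecidableEq J]
    {A : Matrix I J ℝ} {C : ℝ} (hC : 0 ≤ C)
    (hA : ∀ v, ∑ i, (A *ᵥ v) i ^ 2 ≤ C ^ 2 * ∑ j, v j ^ 2) : ‖A‖ ≤ C := by
  rw [Matrix.l2_opNorm_def]
  refine ContinuousLinearMap.opNorm_le_bound _ hC fun v => ?_
  refine le_of_sq_le_sq ?_ (by positivity)
  rw [mul_pow, EuclideanSpace.real_norm_sq_eq, EuclideanSpace.real_norm_sq_eq]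
  exact hA v

theorem sum_sq_mul_le {I J K : Type*} [Fintype I] [Fintype J] [DecidableEq J] [Fintype K]
    (A : Matrix I J ℝ) (B : Matrix J K ℝ) :
    ∑ i, ∑ k, (A * B) i k ^ 2 ≤ ‖A‖ ^ 2 * ∑ j, ∑ k, B j k ^ 2 := by
  have hcol : ∀ k, ∑ i, (A * B) i k ^ 2 ≤ ‖A‖ ^ 2 * ∑ j, B j k ^ 2 := by
    intro k
    have h := pow_le_pow_left₀ (norm_nonneg _)
      (A.l2_opNorm_mulVec (WithLp.toLp 2 fun j => B j k)) 2
    rwa [mul_pow, EuclideanSpace.real_norm_sq_eq, EuclideanSpace.real_norm_sq_eq] at h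
  calc ∑ i, ∑ k, (A * B) i k ^ 2 = ∑ k, ∑ i, (A * B) i k ^ 2 := Finset.sum_comm
    _ ≤ ∑ k, ‖A‖ ^ 2 * ∑ j, B j k ^ 2 := Finset.sum_le_sum fun k _ => hcol k
    _ = ‖A‖ ^ 2 * ∑ j, ∑ k, B j k ^ 2 := by rw [← Finset.mul_sum, Finset.sum_comm]

variable {σ : ℝ → Arg n m d → Sig n d} {t Lz : ℝ} {p : Arg n m d}

theorem frobS_sz_le (hσ : DifferentiableAt ℝ (σ t) p)
    (hLip : ∀ (x : Fin n → ℝ) (y : Tens n m 0) (z z' : TensZ n m d 0),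
      frobS (σ t (x, y, z) - σ t (x, y, z')) ≤ Lz * frobTZ (z - z'))
    (ζ : TensZ n m d 0) : frobS (sz σ t p ζ) ≤ Lz * frobTZ ζ := by
  obtain ⟨x, y, z⟩ := p
  have hslope : Tendsto (fun h : ℝ => h⁻¹ • (σ t ((x, y, z) + h • (0, 0, ζ)) - σ t (x, y, z)))
      (𝓝[≠] 0) (𝓝 (sz σ t (x, y, z) ζ)) := by
    simpa only [sz, zero_add, zero_smul, add_zero] using
      (hσ.hasFDerivAt.hasLineDerivAt ((0, 0, ζ) : Arg n m d)).tendsto_slope_zero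
  refine le_of_tendsto ((continuous_frobS.tendsto _).comp hslope) ?_
  filter_upwards [self_mem_nhdsWithin] with h hh
  have hdiff : frobS (σ t ((x, y, z) + h • (0, 0, ζ)) - σ t (x, y, z)) ≤
        Lz * (|h| * frobTZ ζ) := by
    simpa only [Prod.smul_mk, smul_zero, Prod.mk_add_mk, add_zero, add_sub_cancel_left,
      frobTZ_smul] using hLip x y (z + h • ζ) z
  rw [Function.comp_apply, frobS_smul, abs_inv, inv_mul_le_iff₀ (abs_pos.2 hh)]
  linarith

theorem sz_eq_sum (v : Fin m × Fin d → ℝ) :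
    sz σ t p (fun a b _ => v (a, b)) = ∑ pq, v pq • sz σ t p (eZ pq.1 pq.2) := by
  have hbasis : (fun a b _ => v (a, b) : TensZ n m d 0) = ∑ pq, v pq • eZ pq.1 pq.2 := by
    ext a b c
    simp only [Finset.sum_apply, Pi.smul_apply, eZ, smul_eq_mul, ← Prod.mk.injEq, Prod.mk.eta,
      mul_ite, mul_one, mul_zero, Finset.sum_ite_eq, Finset.mem_univ, if_true]
  let D : TensZ n m d 0 →L[ℝ] Sig n d := (fderiv ℝ (σ t) p).comp
    ((ContinuousLinearMap.inr ℝ (Fin n → ℝ) _).comp (ContinuousLinearMap.inr ℝ (Tens n m 0) _))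
  change D _ = ∑ pq : Fin m × Fin d, v pq • D (eZ pq.1 pq.2)
  simp only [hbasis, map_sum, map_smul]

theorem one_sub_Gmat_mulVec (y1 : Tens n m 1) (v : Fin m × Fin d → ℝ) (ab : Fin m × Fin d) :
    ((1 - Gmat σ t p y1) *ᵥ v) ab =
      (mat1 y1 * Matrix.of (sz σ t p fun a b _ => v (a, b))) ab.1 ab.2 := by
  simp only [Gmat, sub_sub_cancel, Matrix.mulVec, dotProduct, Matrix.of_apply, Matrix.mul_apply,
    sz_eq_sum, Finset.sum_apply, Pi.smul_apply, smul_eq_mul, Finset.mul_sum, Finset.sum_mul]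
  rw [Finset.sum_comm]
  exact Finset.sum_congr rfl fun i _ => Finset.sum_congr rfl fun pq _ => by ring

theorem norm_one_sub_Gmat_le (hLz : 0 ≤ Lz) (hσ : DifferentiableAt ℝ (σ t) p)
    (hLip : ∀ (x : Fin n → ℝ) (y : Tens n m 0) (z z' : TensZ n m d 0),
      frobS (σ t (x, y, z) - σ t (x, y, z')) ≤ Lz * frobTZ (z - z'))
    (y1 : Tens n m 1) : ‖1 - Gmat σ t p y1‖ ≤ Lz * opN y1 := by
  rw [opN_eq_norm]
  refine l2_opNorm_le_of_sum_sq_mulVec_le (by positivity) fun v => ?_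
  set ζ : TensZ n m d 0 := fun a b _ => v (a, b) with hζ
  have hfrob : frobTZ ζ ^ 2 = ∑ pq, v pq ^ 2 := by
    simp [frobTZ_sq, hζ, Fintype.sum_prod_type]
  have hsz : frobS (sz σ t p ζ) ^ 2 ≤ (Lz * frobTZ ζ) ^ 2 :=
    pow_le_pow_left₀ (Real.sqrt_nonneg _) (frobS_sz_le hσ hLip ζ) 2
  calc ∑ ab, ((1 - Gmat σ t p y1) *ᵥ v) ab ^ 2
      = ∑ a, ∑ b, (mat1 y1 * Matrix.of (sz σ t p ζ)) a b ^ 2 := by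
        simp only [one_sub_Gmat_mulVec, Fintype.sum_prod_type, hζ]
    _ ≤ ‖mat1 y1‖ ^ 2 * frobS (sz σ t p ζ) ^ 2 := by
        rw [frobS_sq]
        exact sum_sq_mul_le _ _
    _ ≤ ‖mat1 y1‖ ^ 2 * (Lz * frobTZ ζ) ^ 2 := by gcongr
    _ = (Lz * ‖mat1 y1‖) ^ 2 * ∑ pq, v pq ^ 2 := by rw [mul_pow, hfrob]; ring

end Norms

section Coefficients

variable {ι E : Type*} [NormedAddCommGroup E] [NormedSpace ℝ E] {r : ℕ} {S : Set E}

section Matrix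

open scoped Matrix.Norms.L2Operator

variable {I J : Type*} [Fintype I] [Fintype J] [DecidableEq J]

theorem BoundedDerivsOn.matrix_of {F : ι → E → I → J → ℝ} (hF : BoundedDerivsOn ℝ r S F) :
    BoundedDerivsOn ℝ r S fun t p => Matrix.of (F t p) :=
  hF.clm_comp (Matrix.ofLinearEquiv ℝ).toLinearMap.toContinuousLinearMap

theorem BoundedDerivsOn.matrix_apply {F : ι → E → Matrix I J ℝ} (hF : BoundedDerivsOn ℝ r S F)
    (i : I) (j : J) : BoundedDerivsOn ℝ r S fun t p => F t p i j :=
  hF.clm_comp (Matrix.entryLinearMap ℝ ℝ i j).toContinuousLinearMap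

end Matrix

variable {τ : ι → ℝ} {σ : ℝ → Arg n m d → Sig n d} {μ : ℝ → Arg n m d → (Fin n → ℝ)}
  {q : ι → E → Arg n m d} {Y1 : ι → E → Tens n m 1} {Z1 : ι → E → TensZ n m d 1}

theorem boundedDerivsOn_mat1_apply (hY : BoundedDerivsOn ℝ r S Y1) (a : Fin m) (i : Fin n) :
    BoundedDerivsOn ℝ r S fun t p => mat1 (Y1 t p) a i :=
  (hY.pi_apply a).pi_apply _

open scoped Matrix.Norms.L2Operator in
theorem boundedDerivsOn_Gmat_inv_apply
    (hσ : BoundedDerivsOn ℝ r S fun t p => fderiv ℝ (σ (τ t)) (q t p))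
    (hY : BoundedDerivsOn ℝ r S Y1) {Lz c : ℝ} (hLz : 0 ≤ Lz) (hc : c < 1)
    (hdiff : ∀ t, ∀ p ∈ S, DifferentiableAt ℝ (σ (τ t)) (q t p))
    (hLip : ∀ t, ∀ (x : Fin n → ℝ) (y : Tens n m 0) (z z' : TensZ n m d 0),
      frobS (σ (τ t) (x, y, z) - σ (τ t) (x, y, z')) ≤ Lz * frobTZ (z - z'))
    (hYc : ∀ t, ∀ p ∈ S, Lz * opN (Y1 t p) ≤ c) (ab pq : Fin m × Fin d) :
    BoundedDerivsOn ℝ r S fun t p => (Gmat σ (τ t) (q t p) (Y1 t p))⁻¹ ab pq := by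
  have hG : BoundedDerivsOn ℝ r S fun t p => Gmat σ (τ t) (q t p) (Y1 t p) := by
    refine (BoundedDerivsOn.const 1).sub (BoundedDerivsOn.matrix_of ?_)
    exact .pi fun ab => .pi fun pq => .sum fun i _ => (boundedDerivsOn_mat1_apply hY _ _).mul
      (((hσ.clm_apply_const _).pi_apply _).pi_apply _)
  have hGinv := hG.ringInverse_of_norm_one_sub_le hc fun t p hp =>
    (norm_one_sub_Gmat_le hLz (hdiff t p hp) (hLip t) _).trans (hYc t p hp)
  simpa only [Matrix.nonsing_inv_eq_ringInverse] using hGinv.matrix_apply ab pq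

theorem boundedDerivsOn_h1 (hσ : BoundedDerivsOn ℝ r S fun t p => fderiv ℝ (σ (τ t)) (q t p))
    (hY : BoundedDerivsOn ℝ r S Y1) (hZ : BoundedDerivsOn ℝ r S Z1)
    (hG : ∀ ab pq, BoundedDerivsOn ℝ r S fun t p => (Gmat σ (τ t) (q t p) (Y1 t p))⁻¹ ab pq) :
    BoundedDerivsOn ℝ r S fun t p => h1 σ (τ t) (q t p) (Y1 t p) (Z1 t p) := by
  refine .pi fun a => .pi fun b => .pi fun c => .sum fun pq _ => (hG _ _).mul ?_
  have hYσ : ∀ (v : Arg n m d) (i : Fin m) (j : Fin d), BoundedDerivsOn ℝ r S fun t p =>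
      ∑ l, mat1 (Y1 t p) i l * fderiv ℝ (σ (τ t)) (q t p) v l j := fun v i j =>
    .sum fun l _ => (boundedDerivsOn_mat1_apply hY _ _).mul
      (((hσ.clm_apply_const v).pi_apply l).pi_apply j)
  exact ((hYσ _ _ _).add (.sum fun j _ => (hYσ _ _ _).mul (boundedDerivsOn_mat1_apply hY _ _))).add
    (((hZ.pi_apply _).pi_apply _).pi_apply _)

theorem boundedDerivsOn_Bmat (hσ : BoundedDerivsOn ℝ r S fun t p => fderiv ℝ (σ (τ t)) (q t p))
    (hY : BoundedDerivsOn ℝ r S Y1)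
    (hh : BoundedDerivsOn ℝ r S fun t p => h1 σ (τ t) (q t p) (Y1 t p) (Z1 t p)) (b : Fin d) :
    BoundedDerivsOn ℝ r S fun t p => Bmat σ (τ t) (q t p) (Y1 t p) (Z1 t p) b := by
  have hσv : ∀ (v : Arg n m d) (i : Fin n), BoundedDerivsOn ℝ r S fun t p =>
      fderiv ℝ (σ (τ t)) (q t p) v i b :=
    fun v i => ((hσ.clm_apply_const v).pi_apply i).pi_apply b
  exact .pi fun i => .pi fun c => ((hσv _ _).add
    (.sum fun a _ => (hσv _ _).mul (boundedDerivsOn_mat1_apply hY _ _))).add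
    (.sum fun pq _ => (hσv _ _).mul (((hh.pi_apply _).pi_apply _).pi_apply _))

theorem boundedDerivsOn_Amat (hμ : BoundedDerivsOn ℝ r S fun t p => fderiv ℝ (μ (τ t)) (q t p))
    (hY : BoundedDerivsOn ℝ r S Y1)
    (hh : BoundedDerivsOn ℝ r S fun t p => h1 σ (τ t) (q t p) (Y1 t p) (Z1 t p)) :
    BoundedDerivsOn ℝ r S fun t p => Amat μ σ (τ t) (q t p) (Y1 t p) (Z1 t p) := by
  have hμv : ∀ (v : Arg n m d) (i : Fin n), BoundedDerivsOn ℝ r S fun t p =>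
      fderiv ℝ (μ (τ t)) (q t p) v i :=
    fun v i => (hμ.clm_apply_const v).pi_apply i
  exact .pi fun i => .pi fun c => ((hμv _ _).add
    (.sum fun a _ => (hμv _ _).mul (boundedDerivsOn_mat1_apply hY _ _))).add
    (.sum fun pq _ => (hμv _ _).mul (((hh.pi_apply _).pi_apply _).pi_apply _))

theorem boundedDerivsOn_mulRight {k : ℕ} {y : ι → E → Tens n m (k + 1)}
    {A : ι → E → Fin n → Fin n → ℝ} (hy : BoundedDerivsOn ℝ r S y)
    (hA : BoundedDerivsOn ℝ r S A) : BoundedDerivsOn ℝ r S fun t p => mulRight (y t p) (A t p) :=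
  .pi fun a => .pi fun _ => .sum fun j _ =>
    ((hy.pi_apply a).pi_apply _).mul ((hA.pi_apply j).pi_apply _)

theorem boundedDerivsOn_hK {k : ℕ} {yk : ι → E → Tens n m (k + 1)}
    {zk : ι → E → TensZ n m d (k + 1)} (hyk : BoundedDerivsOn ℝ r S yk)
    (hzk : BoundedDerivsOn ℝ r S zk)
    (hB : ∀ b, BoundedDerivsOn ℝ r S fun t p => Bmat σ (τ t) (q t p) (Y1 t p) (Z1 t p) b) :
    BoundedDerivsOn ℝ r S fun t p =>
      hK σ (τ t) (q t p) (Y1 t p) (Z1 t p) (yk t p) (zk t p) :=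
  .pi fun a => .pi fun b => .pi fun c => (((hzk.pi_apply a).pi_apply b).pi_apply c).add
    (((boundedDerivsOn_mulRight hyk (hB b)).pi_apply a).pi_apply c)

section Recursion

variable {i : ℕ} {D : ι → E → EE n m d i →L[ℝ] Tens n m i}

theorem boundedDerivsOn_appX (hD : BoundedDerivsOn ℝ r S D) :
    BoundedDerivsOn ℝ r S fun t p => appX (Dx (D t p)) :=
  .pi fun a => .pi fun _ => ((hD.clm_apply_const _).pi_apply a).pi_apply _

theorem boundedDerivsOn_appY (hD : BoundedDerivsOn ℝ r S D) (j : Fin (i + 1))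
    {y : ι → E → Tens n m (j + 1)} (hy : BoundedDerivsOn ℝ r S y) :
    BoundedDerivsOn ℝ r S fun t p => appY (Dyp (D t p) j) (y t p) := by
  refine .pi fun a => .pi fun c => ?_
  have hslice : BoundedDerivsOn ℝ r S fun t p =>
      (fun a' c' => y t p a' (Fin.snoc c' (c (Fin.last i))) : Tens n m j) :=
    .pi fun a' => .pi fun _ => (hy.pi_apply a').pi_apply _
  let embed : Tens n m j →L[ℝ] EE n m d i := (ContinuousLinearMap.inr ℝ _ _).comp
    ((ContinuousLinearMap.inl ℝ _ _).comp
      (ContinuousLinearMap.single ℝ (fun l : Fin (i + 1) => Tens n m l) j))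
  exact ((hD.clm_apply (hslice.clm_comp embed)).pi_apply a).pi_apply _

theorem boundedDerivsOn_appZ (hD : BoundedDerivsOn ℝ r S D) (j : Fin (i + 1))
    {z : ι → E → TensZ n m d (j + 1)} (hz : BoundedDerivsOn ℝ r S z) :
    BoundedDerivsOn ℝ r S fun t p => appZ (Dzp (D t p) j) (z t p) := by
  refine .pi fun a => .pi fun c => ?_
  have hslice : BoundedDerivsOn ℝ r S fun t p =>
      (fun a' b' c' => z t p a' b' (Fin.snoc c' (c (Fin.last i))) : TensZ n m d j) :=
    .pi fun a' => .pi fun b' => .pi fun _ => ((hz.pi_apply a').pi_apply b').pi_apply _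
  let embed : TensZ n m d j →L[ℝ] EE n m d i := (ContinuousLinearMap.inr ℝ _ _).comp
    ((ContinuousLinearMap.inr ℝ _ _).comp
      (ContinuousLinearMap.single ℝ (fun l : Fin (i + 1) => TensZ n m d l) j))
  exact ((hD.clm_apply (hslice.clm_comp embed)).pi_apply a).pi_apply _

end Recursion

end Coefficients

section Domains

/-- The space variables `(x, y⁽⁰⁾, z⁽⁰⁾)` of a point of `Θ_i`, as a continuous linear map. -/
noncomputable def argL (n m d i : ℕ) : EE n m d i →L[ℝ] Arg n m d :=
  LinearMap.toContinuousLinearMap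
    { toFun := fun p => (p.1, p.2.1 0, p.2.2 0)
      map_add' := fun _ _ => rfl
      map_smul' := fun _ _ => rfl }

/-- The truncation `θ_{i+1} ↦ θ_i`, as a continuous linear map. -/
noncomputable def resL (n m d i : ℕ) : EE n m d (i + 1) →L[ℝ] EE n m d i :=
  LinearMap.toContinuousLinearMap
    { toFun := fun p => (p.1, fun j => p.2.1 j.castSucc, fun j => p.2.2 j.castSucc)
      map_add' := fun _ _ => rfl
      map_smul' := fun _ _ => rfl }

/-- The spatial part of `Θ_i`: the condition `‖y⁽¹⁾‖_op < L_{σ,z}⁻¹` is written as a product, so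
that it is void for `L_{σ,z} = 0`. -/
def theta (Lz : ℝ) (i : ℕ) : Set (EE n m d i) :=
  {p | ∀ hi : 1 ≤ i, Lz * opN (p.2.1 ⟨1, Nat.succ_le_succ hi⟩) < 1}

/-- The part of `Θ_i` on which the derivatives of `φ⁽ⁱ⁾` are bounded: `z⁽⁰⁾` and all
`y⁽ˡ⁾`, `z⁽ˡ⁾` with `l ≥ 1` are bounded by `R`, while `x` and `y⁽⁰⁾` are free, and
`L_{σ,z} ‖y⁽¹⁾‖_op ≤ c`, where `c < 1` keeps `y⁽¹⁾` away from the boundary of `Θ_i`. -/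
def thetaBounded (Lz R c : ℝ) (i : ℕ) : Set (EE n m d i) :=
  {p | frobTZ (p.2.2 0) ≤ R ∧
    (∀ l : Fin (i + 1), 1 ≤ l.1 → ‖p.2.1 l‖ ≤ R ∧ ‖p.2.2 l‖ ≤ R) ∧
    ∀ hi : 1 ≤ i, Lz * opN (p.2.1 ⟨1, Nat.succ_le_succ hi⟩) ≤ c}

variable {Lz R c : ℝ} {i r : ℕ} {ι : Type*}

theorem mapsTo_resL_thetaBounded :
    MapsTo (resL n m d i) (thetaBounded Lz R c (i + 1)) (thetaBounded Lz R c i) :=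
  fun _ hp => ⟨hp.1, fun l hl => hp.2.1 l.castSucc hl, fun hi => hp.2.2 (Nat.le_succ_of_le hi)⟩

theorem boundedDerivsOn_y (l : Fin (i + 1)) (hl : 1 ≤ l.1) :
    BoundedDerivsOn ℝ r (thetaBounded Lz R c i) fun (_ : ι) (p : EE n m d i) => p.2.1 l :=
  let coordinate : EE n m d i →L[ℝ] Tens n m l := (ContinuousLinearMap.proj l).comp
    ((ContinuousLinearMap.fst ℝ _ _).comp (ContinuousLinearMap.snd ℝ _ _))
  .of_clm coordinate ⟨R, fun _ hp => (hp.2.1 l hl).1⟩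

theorem boundedDerivsOn_z (l : Fin (i + 1)) (hl : 1 ≤ l.1) :
    BoundedDerivsOn ℝ r (thetaBounded Lz R c i) fun (_ : ι) (p : EE n m d i) => p.2.2 l :=
  let coordinate : EE n m d i →L[ℝ] TensZ n m d l := (ContinuousLinearMap.proj l).comp
    ((ContinuousLinearMap.snd ℝ _ _).comp (ContinuousLinearMap.snd ℝ _ _))
  .of_clm coordinate ⟨R, fun _ hp => (hp.2.1 l hl).2⟩

theorem eventually_forall_mem_le_atTop {α : Type*} {g : α → ℝ} {K : Set α}
    (hK : BddAbove (g '' K)) : ∀ᶠ R in atTop, ∀ x ∈ K, g x ≤ R := by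
  obtain ⟨M, hM⟩ := hK
  filter_upwards [eventually_ge_atTop M] with R hR x hx
  exact (hM (mem_image_of_mem g hx)).trans hR

theorem exists_subset_thetaBounded (hi : 1 ≤ i) {A : Set (TensZ n m d 0)} (hA : IsCompact A)
    {B : (l : Fin (i + 1)) → Set (Tens n m l)} {C : (l : Fin (i + 1)) → Set (TensZ n m d l)}
    (hBC : ∀ l : Fin (i + 1), 1 ≤ l.1 → IsCompact (B l) ∧ IsCompact (C l))
    (hB : ∀ v ∈ B ⟨1, Nat.succ_le_succ hi⟩, Lz * opN v < 1) :
    ∃ R c : ℝ, c < 1 ∧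
      {p : EE n m d i | p.2.2 0 ∈ A ∧
        ∀ l : Fin (i + 1), 1 ≤ l.1 → p.2.1 l ∈ B l ∧ p.2.2 l ∈ C l} ⊆ thetaBounded Lz R c i := by
  obtain ⟨b, hb, hbB⟩ := (hBC ⟨1, Nat.succ_le_succ hi⟩ le_rfl).1.exists_forall_le'
    (f := fun v : Tens n m 1 => -(Lz * opN v))
    (continuous_const.mul continuous_opN).neg.continuousOn fun v hv => neg_lt_neg (hB v hv)
  have hRA : ∀ᶠ R in atTop, ∀ z ∈ A, frobTZ z ≤ R :=
    eventually_forall_mem_le_atTop (hA.bddAbove_image continuous_frobTZ.continuousOn)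
  have hRBC : ∀ᶠ R in atTop, ∀ l : Fin (i + 1), 1 ≤ l.1 →
      (∀ v ∈ B l, ‖v‖ ≤ R) ∧ ∀ v ∈ C l, ‖v‖ ≤ R :=
    eventually_all.2 fun l => eventually_imp_distrib_left.2 fun hl =>
      have hBl := (hBC l hl).1.bddAbove_image continuous_norm.continuousOn
      have hCl := (hBC l hl).2.bddAbove_image continuous_norm.continuousOn
      (eventually_forall_mem_le_atTop hBl).and (eventually_forall_mem_le_atTop hCl)
  obtain ⟨R, hR, hR'⟩ := (hRA.and hRBC).exists
  refine ⟨R, -b, neg_lt.1 hb, fun p hp => ⟨hR _ hp.1, fun l hl => ?_, fun _ => ?_⟩⟩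
  · exact ⟨(hR' l hl).1 _ (hp.2 l hl).1, (hR' l hl).2 _ (hp.2 l hl).2⟩
  · exact le_neg_of_le_neg (hbB _ (hp.2 ⟨1, Nat.succ_le_succ hi⟩ le_rfl).1)

theorem exists_mem_thetaBounded (hi : 1 ≤ i) {p : EE n m d i} (hp : p ∈ theta Lz i) :
    ∃ R c : ℝ, c < 1 ∧ p ∈ thetaBounded Lz R c i := by
  obtain ⟨R, c, hc, hsub⟩ := exists_subset_thetaBounded (Lz := Lz) hi
    (isCompact_singleton (x := p.2.2 0)) (B := fun l => {p.2.1 l}) (C := fun l => {p.2.2 l})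
    (fun _ _ => ⟨isCompact_singleton, isCompact_singleton⟩) (by rintro v rfl; exact hp hi)
  exact ⟨R, c, hc, hsub ⟨rfl, fun _ _ => ⟨rfl, rfl⟩⟩⟩

end Domains

section LocallyBoundedCoefficients

variable {T Lz R c : ℝ} {k r i : ℕ} {G : Type*} [NormedAddCommGroup G] [NormedSpace ℝ G]
  {g : ℝ → Arg n m d → G}

/-- For `t ∈ [0,T]` the function `g t` is `k` times continuously differentiable, with derivatives
of orders `1, …, k` bounded uniformly in `t` on the sets with bounded `z`-component. -/
structure HasLocallyBoundedDerivs (k : ℕ) (T : ℝ) (g : ℝ → Arg n m d → G) : Prop where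
  contDiff : ∀ t ∈ Icc 0 T, ContDiff ℝ k (g t)
  bounded : ∀ R : ℝ, ∃ M : ℝ, ∀ t ∈ Icc 0 T, ∀ p : Arg n m d, frobTZ p.2.2 ≤ R →
    ∀ j, 1 ≤ j → j ≤ k → ‖iteratedFDeriv ℝ j (g t) p‖ ≤ M

theorem HasLocallyBoundedDerivs.of_lipschitzOnWith
    (hg : ∀ t ∈ Icc 0 T, ContDiff ℝ k (g t))
    (hLip : ∀ R : ℝ, ∃ L : NNReal, ∀ t ∈ Icc 0 T, ∀ j < k,
      LipschitzOnWith L (iteratedFDeriv ℝ j (g t)) {p : Arg n m d | frobTZ p.2.2 ≤ R}) :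
    HasLocallyBoundedDerivs k T g := by
  refine ⟨hg, fun R => ?_⟩
  obtain ⟨L, hL⟩ := hLip (R + 1)
  refine ⟨L, fun t ht p hp j hj hjk => ?_⟩
  obtain ⟨j, rfl⟩ := Nat.exists_eq_add_of_le' hj
  have hcont : Continuous fun p : Arg n m d => frobTZ p.2.2 :=
    continuous_frobTZ.comp (continuous_snd.comp continuous_snd)
  have hnhds : {p : Arg n m d | frobTZ p.2.2 ≤ R + 1} ∈ 𝓝 p :=
    hcont.continuousAt.eventually_le_const (hp.trans_lt (lt_add_one R))
  rw [← norm_fderiv_iteratedFDeriv]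
  exact norm_fderiv_le_of_lipschitzOn ℝ hnhds (hL t ht j hjk)

theorem HasLocallyBoundedDerivs.differentiableAt (hg : HasLocallyBoundedDerivs k T g)
    (hk : 1 ≤ k) {t : ℝ} (ht : t ∈ Icc 0 T) (p : Arg n m d) : DifferentiableAt ℝ (g t) p :=
  ((hg.contDiff t ht).differentiable (by exact_mod_cast Nat.one_le_iff_ne_zero.1 hk)) p

theorem HasLocallyBoundedDerivs.boundedDerivsOn_fderiv (hg : HasLocallyBoundedDerivs k T g)
    (hrk : r + 1 ≤ k) : BoundedDerivsOn ℝ r (thetaBounded Lz R c i)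
      fun (t : Icc 0 T) p => fderiv ℝ (g t) (argL n m d i p) := by
  have hbdd : BoundedDerivsOn ℝ r {p : Arg n m d | frobTZ p.2.2 ≤ R}
      fun (t : Icc 0 T) => fderiv ℝ (g t) :=
    ⟨fun t p _ => ((hg.contDiff t t.2).fderiv_right (by exact_mod_cast hrk)).contDiffAt,
      (hg.bounded R).imp fun M hM t p hp j hj =>
        norm_iteratedFDeriv_fderiv.trans_le (hM t t.2 p hp (j + 1) (by lia) (by lia))⟩
  exact hbdd.comp_clm (argL n m d i) fun p hp => hp.1

end LocallyBoundedCoefficients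

section Recursion

/-- A weakening of `(k-MLLC)` that suffices for the regularity of the `φ⁽ⁱ⁾`: the derivatives of
order `k` are only locally bounded instead of locally Lipschitz, and no bound is imposed on the
values of `μ`, `σ` and `f`. -/
structure WeakMLLC (n m d k : ℕ) (T : ℝ) (μ : ℝ → Arg n m d → (Fin n → ℝ))
    (σ : ℝ → Arg n m d → Sig n d) (f : ℝ → Arg n m d → Tens n m 0) (Lz : ℝ) : Prop where
  mu : HasLocallyBoundedDerivs k T μ
  sigma : HasLocallyBoundedDerivs k T σ
  f : HasLocallyBoundedDerivs k T f
  lz_nonneg : 0 ≤ Lz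
  lz_lipschitz : ∀ t ∈ Icc 0 T, ∀ (x : Fin n → ℝ) (y : Tens n m 0) (z z' : TensZ n m d 0),
    frobS (σ t (x, y, z) - σ t (x, y, z')) ≤ Lz * frobTZ (z - z')

/-- The functions `φ⁽ⁱ⁾`, with the partial derivatives in the recursion taken from `fderiv`. -/
noncomputable def phi (μ : ℝ → Arg n m d → (Fin n → ℝ)) (σ : ℝ → Arg n m d → Sig n d)
    (f : ℝ → Arg n m d → Tens n m 0) : (i : ℕ) → PhiFun n m d i
  | 0 => fun t p => f t (argL n m d 0 p)
  | i + 1 => fun t p =>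
      phiStep μ σ t (fderiv ℝ (phi μ σ f i t) (resL n m d i p)) p.1 p.2.1 p.2.2

variable {T Lz R c : ℝ} {k r i : ℕ} {μ : ℝ → Arg n m d → (Fin n → ℝ)}
  {σ : ℝ → Arg n m d → Sig n d} {f : ℝ → Arg n m d → Tens n m 0}

theorem MLLC.weakMLLC (h : MLLC n m d k T μ σ f Lz) : WeakMLLC n m d k T μ σ f Lz where
  mu := .of_lipschitzOnWith h.smooth_mu fun R =>
    (h.lipschitz_on_bounded R).imp fun _ hL t ht j hj => (hL t ht j hj.le).1
  sigma := .of_lipschitzOnWith h.smooth_sigma fun R =>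
    (h.lipschitz_on_bounded R).imp fun _ hL t ht j hj => (hL t ht j hj.le).2.1
  f := .of_lipschitzOnWith h.smooth_f fun R =>
    (h.lipschitz_on_bounded R).imp fun _ hL t ht j hj => (hL t ht j hj.le).2.2
  lz_nonneg := h.lz_nonneg
  lz_lipschitz := h.lz_lipschitz

namespace WeakMLLC

theorem boundedDerivsOn_phiStep (h : WeakMLLC n m d k T μ σ f Lz) (hrk : r + 1 ≤ k) (hc : c < 1)
    {D : Icc 0 T → EE n m d (i + 1) → EE n m d i →L[ℝ] Tens n m i}
    (hD : BoundedDerivsOn ℝ r (thetaBounded Lz R c (i + 1)) D) :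
    BoundedDerivsOn ℝ r (thetaBounded Lz R c (i + 1)) fun (t : Icc 0 T) p =>
      phiStep μ σ t (D t p) p.1 p.2.1 p.2.2 := by
  set S : Set (EE n m d (i + 1)) := thetaBounded Lz R c (i + 1)
  have hY : ∀ j : Fin (i + 1), BoundedDerivsOn ℝ r S fun (_ : Icc 0 T) p => p.2.1 j.succ :=
    fun j => boundedDerivsOn_y j.succ (Nat.le_add_left 1 j)
  have hZ : ∀ j : Fin (i + 1), BoundedDerivsOn ℝ r S fun (_ : Icc 0 T) p => p.2.2 j.succ :=
    fun j => boundedDerivsOn_z j.succ (Nat.le_add_left 1 j)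
  have hσ : BoundedDerivsOn ℝ r S fun (t : Icc 0 T) p =>
      fderiv ℝ (σ t) (argL n m d (i + 1) p) := h.sigma.boundedDerivsOn_fderiv hrk
  have hG := boundedDerivsOn_Gmat_inv_apply hσ (hY 0) h.lz_nonneg hc
    (fun t _ _ => h.sigma.differentiableAt (by lia) t.2 _) (fun t => h.lz_lipschitz t t.2)
    (fun _ _ hp => hp.2.2 (Nat.le_add_left 1 i))
  have hh := boundedDerivsOn_h1 hσ (hY 0) (hZ 0) hG
  have hB := boundedDerivsOn_Bmat hσ (hY 0) hh
  have hA := boundedDerivsOn_Amat (h.mu.boundedDerivsOn_fderiv hrk) (hY 0) hh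
  have hhGen : ∀ j : Fin (i + 1), BoundedDerivsOn ℝ r S fun (t : Icc 0 T) p =>
      hGen σ t (argL n m d (i + 1) p) (p.2.1 1) (p.2.2 1) (p.2.1 j.succ) (p.2.2 j.succ)
    | ⟨0, _⟩ => hh
    | ⟨j + 1, hj⟩ => boundedDerivsOn_hK (hY ⟨j + 1, hj⟩) (hZ ⟨j + 1, hj⟩) hB
  have hZb : ∀ b : Fin d, BoundedDerivsOn ℝ r S fun (_ : Icc 0 T) p =>
      (fun a c => p.2.2 (Fin.last (i + 1)) a b c : Tens n m (i + 1)) :=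
    fun b => .pi fun a => ((hZ (Fin.last i)).pi_apply a).pi_apply b
  exact (((boundedDerivsOn_appX hD).add (.sum fun j _ => (boundedDerivsOn_appY hD j (hY j)).add
    (boundedDerivsOn_appZ hD j (hhGen j)))).sub (boundedDerivsOn_mulRight (hY (Fin.last i)) hA)).sub
    (.sum fun b _ => boundedDerivsOn_mulRight (hZb b) (hB b))

theorem boundedDerivsOn_phi_succ_of_fderiv (h : WeakMLLC n m d k T μ σ f Lz) (hrk : r + 1 ≤ k)
    (hc : c < 1) (hphi : BoundedDerivsOn ℝ r (thetaBounded Lz R c i)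
      fun (t : Icc 0 T) => fderiv ℝ (phi μ σ f i t)) :
    BoundedDerivsOn ℝ r (thetaBounded Lz R c (i + 1)) fun (t : Icc 0 T) => phi μ σ f (i + 1) t :=
  h.boundedDerivsOn_phiStep hrk hc (hphi.comp_clm (resL n m d i) mapsTo_resL_thetaBounded)

theorem boundedDerivsOn_fderiv_phi_zero (h : WeakMLLC n m d k T μ σ f Lz) (hrk : r + 1 ≤ k) :
    BoundedDerivsOn ℝ r (thetaBounded Lz R c 0) fun (t : Icc 0 T) => fderiv ℝ (phi μ σ f 0 t) := by
  refine ((h.f.boundedDerivsOn_fderiv hrk).clm_comp ((ContinuousLinearMap.compL ℝ (EE n m d 0)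
    (Arg n m d) (Tens n m 0)).flip (argL n m d 0))).congr fun t p _ => .of_forall fun p => ?_
  exact ((h.f.differentiableAt (by lia) t.2 _).hasFDerivAt.comp p
    (argL n m d 0).hasFDerivAt).fderiv

theorem boundedDerivsOn_fderiv_phi (h : WeakMLLC n m d k T μ σ f Lz) (hc : c < 1) :
    ∀ {i r : ℕ}, i + r + 1 ≤ k → BoundedDerivsOn ℝ r (thetaBounded Lz R c i)
      fun (t : Icc 0 T) => fderiv ℝ (phi μ σ f i t)
  | 0, _, hk => h.boundedDerivsOn_fderiv_phi_zero (by lia)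
  | _ + 1, _, hk => (h.boundedDerivsOn_phi_succ_of_fderiv (by lia) hc
      (h.boundedDerivsOn_fderiv_phi hc (by lia))).fderiv

theorem boundedDerivsOn_phi (h : WeakMLLC n m d k T μ σ f Lz) (hc : c < 1) (hi : 1 ≤ i)
    (hik : i ≤ k) :
    BoundedDerivsOn ℝ (k - i) (thetaBounded Lz R c i) fun (t : Icc 0 T) => phi μ σ f i t := by
  obtain ⟨i, rfl⟩ := Nat.exists_eq_add_of_le' hi
  exact h.boundedDerivsOn_phi_succ_of_fderiv (by lia) hc
    (h.boundedDerivsOn_fderiv_phi hc (by lia))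

theorem contDiffAt_phi (h : WeakMLLC n m d k T μ σ f Lz) (hik : i ≤ k) {t : ℝ} (ht : t ∈ Icc 0 T)
    {p : EE n m d i} (hp : p ∈ theta Lz i) : ContDiffAt ℝ (k - i : ℕ) (phi μ σ f i t) p := by
  rcases Nat.eq_zero_or_pos i with rfl | hi
  · exact ((h.f.contDiff t ht).comp (argL n m d 0).contDiff).contDiffAt
  · obtain ⟨R, c, hc, hp'⟩ := exists_mem_thetaBounded hi hp
    exact (h.boundedDerivsOn_phi hc hi hik).contDiffAt ⟨t, ht⟩ p hp'

theorem isPhiChain_phi (h : WeakMLLC n m d k T μ σ f Lz) :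
    IsPhiChain n m d k T Lz μ σ f (phi μ σ f) where
  base _ _ _ := rfl
  step i hik t ht x Y Z hY := by
    have hmem : resL n m d i (x, Y, Z) ∈ theta Lz i := fun _ => hY
    have hdiff : DifferentiableAt ℝ (phi μ σ f i t) (resL n m d i (x, Y, Z)) :=
      (h.contDiffAt_phi (Nat.le_of_succ_le hik) ht hmem).differentiableAt
        (by exact_mod_cast Nat.sub_ne_zero_of_lt hik)
    exact ⟨fderiv ℝ (phi μ σ f i t) (resL n m d i (x, Y, Z)), hdiff.hasFDerivAt, rfl⟩

end WeakMLLC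

end Recursion

theorem phi_chain_exists_smooth_and_bounded_general {T Lz : ℝ} {k : ℕ}
    {μ : ℝ → Arg n m d → (Fin n → ℝ)} {σ : ℝ → Arg n m d → Sig n d}
    {f : ℝ → Arg n m d → Tens n m 0} (h : WeakMLLC n m d k T μ σ f Lz) :
    ∃ φ : (i : ℕ) → PhiFun n m d i,
      IsPhiChain n m d k T Lz μ σ f φ ∧
      (∀ i ≤ k, ∀ t ∈ Icc 0 T, ContDiffOn ℝ (k - i : ℕ) (φ i t) (theta Lz i)) ∧
      ∀ i, 1 ≤ i → i ≤ k → ∀ R c : ℝ, c < 1 → ∃ M : ℝ, ∀ t ∈ Icc 0 T,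
        ∀ p ∈ thetaBounded Lz R c i, ∀ j ≤ k - i, ‖iteratedFDeriv ℝ j (φ i t) p‖ ≤ M :=
  ⟨phi μ σ f, h.isPhiChain_phi,
    fun _ hik _ ht _ hp => (h.contDiffAt_phi hik ht hp).contDiffWithinAt,
    fun _ hi hik _ _ hc => (h.boundedDerivsOn_phi hc hi hik).bounded.imp
      fun _ hM t ht => hM ⟨t, ht⟩⟩

/-- **Lemma 6.1.**  Assume `(μ,σ,f)` satisfies `(k-MLLC)`.  Then for every `i ≤ k` the
function `φ⁽ⁱ⁾` is well defined on `Θ_i` (all partial derivatives occurring in the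
recursive definition exist classically, which is the content of `IsPhiChain`) and is
`k−i` times classically differentiable with respect to
`(x, y⁽⁰⁾, z⁽⁰⁾, …, y⁽ⁱ⁾, z⁽ⁱ⁾)`.  Moreover, for `i ≥ 1`, `φ⁽ⁱ⁾` and all of these
derivatives up to order `k−i` are bounded on every set of the form
`[0,T]×ℝⁿ×ℝᵐ×A×∏_{l=1}^i (B_l×C_l)` with `A, B_l, C_l` compact and `B₁` contained in
the open ball of radius `L_{σ,z}⁻¹` for the operator norm. -/
theorem phi_chain_exists_smooth_and_bounded
    {n m d : ℕ} {T : ℝ} (hT : 0 < T) (k : ℕ)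
    (μ : ℝ → Arg n m d → (Fin n → ℝ)) (σ : ℝ → Arg n m d → Sig n d)
    (f : ℝ → Arg n m d → Tens n m 0) (Lz : ℝ)
    (hMLLC : MLLC n m d k T μ σ f Lz) :
    ∃ φ : (i : ℕ) → PhiFun n m d i,
      IsPhiChain n m d k T Lz μ σ f φ ∧
      (∀ i : ℕ, i ≤ k → ∀ t ∈ Set.Icc (0:ℝ) T,
        ContDiffOn ℝ ((k - i : ℕ) : ℕ∞) (φ i t)
          {p : EE n m d i |
            ∀ hi : 1 ≤ i, Lz * opN (p.2.1 ⟨1, Nat.succ_le_succ hi⟩) < 1}) ∧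
      (∀ i : ℕ, ∀ hi : 1 ≤ i, i ≤ k →
        ∀ A : Set (TensZ n m d 0), IsCompact A →
        ∀ (B : (l : Fin (i + 1)) → Set (Tens n m l))
          (C : (l : Fin (i + 1)) → Set (TensZ n m d l)),
        (∀ l : Fin (i + 1), 1 ≤ l.1 → IsCompact (B l) ∧ IsCompact (C l)) →
        (∀ v ∈ B ⟨1, Nat.succ_le_succ hi⟩, Lz * opN v < 1) →
        ∃ M : ℝ, ∀ t ∈ Set.Icc (0:ℝ) T, ∀ p : EE n m d i,
          (p.2.2 ⟨0, by omega⟩ ∈ A ∧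
            ∀ l : Fin (i + 1), 1 ≤ l.1 → p.2.1 l ∈ B l ∧ p.2.2 l ∈ C l) →
          ∀ j : ℕ, j ≤ k - i → ‖iteratedFDeriv ℝ j (φ i t) p‖ ≤ M) := by
  obtain ⟨φ, hφ, hsmooth, hbdd⟩ := phi_chain_exists_smooth_and_bounded_general hMLLC.weakMLLC
  refine ⟨φ, hφ, hsmooth, fun i hi hik A hA B C hBC hB => ?_⟩
  obtain ⟨R, c, hc, hsub⟩ := exists_subset_thetaBounded hi hA hBC hB
  exact (hbdd i hi hik R c hc).imp fun M hM t ht p hp => hM t ht p (hsub hp)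

end DecouplingFBSDE
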